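/- Assume σ is essential and A is generated as a ring by φ(R) ∪ {X, Y}. Let M be a simple weight A-module and let m ≠ n be two maximal ideals in supp(M). Then there exist k ∈ ℤ_{≥0} and maximal ideals k_1, …, k_k ∈ supp(M) such that either σ(m) ⊆ k_1, σ(k_j) ⊆ k_{j+1} for 1 ≤ j < k, and σ(k_k) ⊆ n (with σ(m) ⊆ n when k = 0), or the same chain condition holds with the roles of m and n interchanged. -/

import Mathlib

variable {R A M : Type*}

/-- Weight space of an `A`-module `M` (viewed as `R`-module via `φ`) at an ideal `m`:
`M_m = {v ∈ M : r • v = 0 for all r ∈ m}`. -/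
def weightSpace [CommRing R] [Ring A] [AddCommGroup M] [Module A M]
    (φ : R →+* A) (m : Ideal R) : AddSubgroup M where
  carrier := {v | ∀ r ∈ m, φ r • v = 0}
  zero_mem' := fun r _ => smul_zero (φ r)
  add_mem' := by
    intro a b ha hb r hr
    rw [smul_add, ha r hr, hb r hr, add_zero]
  neg_mem' := by
    intro a ha r hr
    rw [smul_neg, ha r hr, neg_zero]

/-- `M` is a weight module: it is the internal direct sum of its weight spaces
over all maximal ideals of `R`. -/
def IsWeightModule [CommRing R] [Ring A] [AddCommGroup M] [Module A M]
    (φ : R →+* A) : Prop :=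
  (⨆ m : {m : Ideal R // m.IsMaximal}, weightSpace (M := M) φ m.1) = ⊤ ∧
  iSupIndep (fun m : {m : Ideal R // m.IsMaximal} => weightSpace (M := M) φ m.1)

/-- `σ` is an essential endomorphism: for every maximal ideal `m` the map
`r ↦ σ(r) + m` from `R` to `R/m` is surjective. -/
def IsEssential [CommRing R] (σ : R →+* R) : Prop :=
  ∀ m : Ideal R, m.IsMaximal →
    Function.Surjective (fun r : R => Ideal.Quotient.mk m (σ r))

/-!
Put an arrow `a → b` between weights in the support when `σ(a) ⊆ b`, that is, when `a = σ⁻¹(b)`;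
every weight has at most one predecessor. If `M` is generated by `M_m`, then additively it is
spanned by the weight spaces of the weights reachable from `m` and by the vectors `Y ^ j • v` with
`v ∈ M_m`: going up by `X` and then down by `Y` retraces the unique path, and going down by `Y` and
then up by `X` is multiplication by an element of `φ(R)`. A nonzero `Y ^ j • v` is a weight vector
whose weight reaches `m`, so all weights of `M` are comparable with `m`.
-/

theorem exists_seq_of_reflTransGen {α : Type*} {r : α → α → Prop} {a b : α}
    (h : Relation.ReflTransGen r a b) :
    ∃ (k : ℕ) (c : ℕ → α), c 0 = a ∧ c k = b ∧ ∀ j < k, r (c j) (c (j + 1)) := by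
  induction h using Relation.ReflTransGen.head_induction_on with
  | refl => exact ⟨0, fun _ => b, rfl, rfl, by simp⟩
  | @head a a' haa' _ ih =>
    obtain ⟨k, c, rfl, hck, hc⟩ := ih
    refine ⟨k + 1, fun j => Nat.casesOn j a c, rfl, hck, ?_⟩
    rintro (_ | j) hj
    · exact haa'
    · exact hc j (Nat.lt_of_succ_lt_succ hj)

theorem span_toAddSubgroup_le_closure [Ring A] [AddCommGroup M] [Module A M]
    {s : Set A} (hs : Subring.closure s = ⊤) {G : Set M}
    (hG : ∀ a ∈ s, ∀ x ∈ G, a • x ∈ AddSubgroup.closure G) :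
    (Submodule.span A G).toAddSubgroup ≤ AddSubgroup.closure G := by
  have smul_mem (a : A) : ∀ w ∈ AddSubgroup.closure G, a • w ∈ AddSubgroup.closure G := by
    induction (hs ▸ Subring.mem_top a : a ∈ Subring.closure s) using Subring.closure_induction with
    | mem a ha =>
      exact (AddSubgroup.closure_le ((AddSubgroup.closure G).comap
        (DistribSMul.toAddMonoidHom M a))).2 (hG a ha)
    | zero => exact fun w _ => (zero_smul A w).symm ▸ zero_mem _
    | one => exact fun w hw => (one_smul A w).symm ▸ hw
    | add a b _ _ ha hb => exact fun w hw => add_smul a b w ▸ add_mem (ha w hw) (hb w hw)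
    | neg a _ ha => exact fun w hw => neg_smul a w ▸ neg_mem (ha w hw)
    | mul a b _ _ ha hb => exact fun w hw => mul_smul a b w ▸ ha _ (hb w hw)
  let N : Submodule A M := { AddSubgroup.closure G with smul_mem' := smul_mem }
  have span_le : Submodule.span A G ≤ N := Submodule.span_le.2 AddSubgroup.subset_closure
  exact span_le

theorem IsEssential.comap_isMaximal [CommRing R] {σ : R →+* R} (hσ : IsEssential σ)
    {n : Ideal R} (hn : n.IsMaximal) : (n.comap σ).IsMaximal := by
  have hsurj : Function.Surjective ((Ideal.Quotient.mk n).comp σ) := hσ n hn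
  have hbot : (⊥ : Ideal (R ⧸ n)).IsMaximal := (Ideal.bot_quotient_isMaximal_iff n).2 hn
  have hcomap := Ideal.comap_isMaximal_of_surjective _ hsurj (K := (⊥ : Ideal (R ⧸ n)))
  rwa [← Ideal.comap_comap, ← RingHom.ker_eq_comap_bot, Ideal.mk_ker] at hcomap

section WeightSpace

variable [CommRing R] [Ring A] [AddCommGroup M] [Module A M]
  {φ : R →+* A} {σ : R →+* R} {X Y : A} {I : Ideal R} {v : M}

theorem map_smul_mem_weightSpace (r : R) (hv : v ∈ weightSpace φ I) :
    φ r • v ∈ weightSpace φ I := by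
  intro s hs
  rw [← mul_smul, ← map_mul, mul_comm, map_mul, mul_smul, hv s hs, smul_zero]

theorem smul_mem_weightSpace_map (hX : ∀ r : R, X * φ r = φ (σ r) * X)
    (hv : v ∈ weightSpace φ I) : X • v ∈ weightSpace φ (I.map σ) := by
  intro s hs
  induction hs using Submodule.span_induction with
  | mem _ h =>
    obtain ⟨r, hr, rfl⟩ := h
    rw [← mul_smul, ← hX, mul_smul, hv r hr, smul_zero]
  | zero => rw [map_zero, zero_smul]
  | add a b _ _ ha hb => rw [map_add, add_smul, ha, hb, add_zero]
  | smul a b _ hb => rw [smul_eq_mul, map_mul, mul_smul, hb, smul_zero]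

theorem smul_mem_weightSpace_comap (hY : ∀ r : R, φ r * Y = Y * φ (σ r))
    (hv : v ∈ weightSpace φ I) : Y • v ∈ weightSpace φ (I.comap σ) := by
  intro r hr
  rw [← mul_smul, hY, mul_smul, hv _ hr, smul_zero]

theorem map_mul_pow_eq_pow_mul_map_iterate (hY : ∀ r : R, φ r * Y = Y * φ (σ r)) (r : R) (j : ℕ) :
    φ r * Y ^ j = Y ^ j * φ (σ^[j] r) := by
  induction j with
  | zero => simp
  | succ j ih =>
    rw [pow_succ, ← mul_assoc, ih, mul_assoc, hY, ← Function.iterate_succ_apply' σ j r, mul_assoc]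

theorem map_smul_mem_iSup_weightSpace {ι : Sort*} {k : ι → Ideal R} (r : R)
    (hv : v ∈ ⨆ i, weightSpace φ (k i)) : φ r • v ∈ ⨆ i, weightSpace (M := M) φ (k i) := by
  have hle : ⨆ i, weightSpace (M := M) φ (k i) ≤
      (⨆ i, weightSpace φ (k i)).comap (DistribSMul.toAddMonoidHom M (φ r)) :=
    iSup_le fun i w hw => AddSubgroup.mem_iSup_of_mem i (map_smul_mem_weightSpace r hw)
  exact hle hv

/- A maximal ideal `k` with `I ≰ k` is comaximal with `I`, so some `p ≡ 1 mod I` kills `M_k`; the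
product of such elements removes the components at finitely many such `k`. -/
theorem exists_map_smul_mem_iSup_weightSpace {S : Set (Ideal R)} (hS : ∀ k ∈ S, k.IsMaximal)
    (I : Ideal R) (hv : v ∈ ⨆ k : S, weightSpace (M := M) φ k) :
    ∃ p : R, 1 - p ∈ I ∧
      φ p • v ∈ ⨆ k : {k | k ∈ S ∧ I ≤ k}, weightSpace (M := M) φ k := by
  refine AddSubgroup.iSup_induction _ (C := fun w => ∃ p : R, 1 - p ∈ I ∧
    φ p • w ∈ ⨆ k : {k | k ∈ S ∧ I ≤ k}, weightSpace (M := M) φ k) hv (fun k w hw => ?_)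
    ⟨1, by simp, by simp⟩ ?_
  · by_cases hk : I ≤ k
    · refine ⟨1, by simp, map_smul_mem_iSup_weightSpace 1 ?_⟩
      exact AddSubgroup.mem_iSup_of_mem (⟨k, k.2, hk⟩ : {k | k ∈ S ∧ I ≤ k}) hw
    · have hcomax : k.1 ⊔ I = ⊤ := codisjoint_iff.1 ((hS k k.2).1.not_le_iff_codisjoint.1 hk)
      obtain ⟨p, hp, i, hi, hpi⟩ := Submodule.mem_sup.1 ((Ideal.eq_top_iff_one _).1 hcomax)
      exact ⟨p, by rwa [← hpi, add_sub_cancel_left], by rw [hw p hp]; exact zero_mem _⟩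
  · rintro w₁ w₂ ⟨p₁, hp₁, hw₁⟩ ⟨p₂, hp₂, hw₂⟩
    refine ⟨p₁ * p₂, ?_, ?_⟩
    · rw [show 1 - p₁ * p₂ = (1 - p₁) + p₁ * (1 - p₂) by ring]
      exact add_mem hp₁ (I.mul_mem_left p₁ hp₂)
    · have h₁ : φ (p₁ * p₂) • w₁ = φ p₂ • φ p₁ • w₁ := by rw [mul_comm, map_mul, mul_smul]
      have h₂ : φ (p₁ * p₂) • w₂ = φ p₁ • φ p₂ • w₂ := by rw [map_mul, mul_smul]
      rw [smul_add, h₁, h₂]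
      exact add_mem (map_smul_mem_iSup_weightSpace p₂ hw₁) (map_smul_mem_iSup_weightSpace p₁ hw₂)

theorem mem_iSup_weightSpace_of_mem_weightSpace {S : Set (Ideal R)} (hS : ∀ k ∈ S, k.IsMaximal)
    (hvI : v ∈ weightSpace φ I) (hvS : v ∈ ⨆ k : S, weightSpace (M := M) φ k) :
    v ∈ ⨆ k : {k | k ∈ S ∧ I ≤ k}, weightSpace (M := M) φ k := by
  obtain ⟨p, hp, hpv⟩ := exists_map_smul_mem_iSup_weightSpace hS I hvS
  have hv : v = φ p • v := by
    simpa only [map_sub, map_one, sub_smul, one_smul, sub_eq_zero] using hvI _ hp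
  exact hv ▸ hpv

end WeightSpace

section Support

variable [CommRing R] [Ring A] [AddCommGroup M] [Module A M]
  {φ : R →+* A} {σ : R →+* R} {X Y : A} {m n : Ideal R}

variable (M) in
/-- The support of `M`: the maximal ideals with a nonzero weight space. -/
def weightSupport (φ : R →+* A) : Set (Ideal R) :=
  {m | m.IsMaximal ∧ weightSpace (M := M) φ m ≠ ⊥}

variable (M) in
/-- The relation `σ(m) ⊆ n` on the support of `M`; its chains are those of the theorem. The
inclusion is expressed as `m ≤ σ⁻¹(n)`. -/
def WeightArrow (φ : R →+* A) (σ : R →+* R) (m n : Ideal R) : Prop :=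
  m ∈ weightSupport M φ ∧ n ∈ weightSupport M φ ∧ m ≤ n.comap σ

/-- The vectors that additively span the submodule generated by `M_m`: those whose weight is
reachable from `m` along arrows, and those of the form `Y ^ j • v` with `v ∈ M_m`. -/
def weightBranch (φ : R →+* A) (σ : R →+* R) (Y : A) (m : Ideal R) : Set M :=
  {w | ∃ k, Relation.ReflTransGen (WeightArrow M φ σ) m k ∧ w ∈ weightSpace φ k} ∪
    {w | ∃ j : ℕ, ∃ v ∈ weightSpace φ m, Y ^ j • v = w}

theorem mem_weightSupport (hm : m.IsMaximal) {v : M} (hv : v ∈ weightSpace φ m) (hv0 : v ≠ 0) :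
    m ∈ weightSupport M φ :=
  ⟨hm, fun h => hv0 (AddSubgroup.mem_bot.1 (h ▸ hv))⟩

theorem mem_of_mem_weightSupport_of_iSup_eq_top {S : Set (Ideal R)} (hS : ∀ k ∈ S, k.IsMaximal)
    (htop : ⨆ k : S, weightSpace (M := M) φ k = ⊤) (hn : n ∈ weightSupport M φ) : n ∈ S := by
  by_contra hnS
  refine hn.2 ((AddSubgroup.eq_bot_iff_forall _).2 fun v hv => ?_)
  have hempty : IsEmpty {k | k ∈ S ∧ n ≤ k} :=
    ⟨fun k => hnS (hn.1.eq_of_le (hS k k.2.1).ne_top k.2.2 ▸ k.2.1)⟩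
  have hv' := mem_iSup_weightSpace_of_mem_weightSpace hS hv (htop ▸ AddSubgroup.mem_top v)
  rwa [iSup_of_empty, AddSubgroup.mem_bot] at hv'

theorem WeightArrow.eq_comap (h : WeightArrow M φ σ m n) : m = n.comap σ :=
  h.1.1.eq_of_le (Ideal.comap_ne_top σ h.2.1.1.ne_top) h.2.2

theorem isMaximal_of_reflTransGen_weightArrow (hm : m.IsMaximal)
    (h : Relation.ReflTransGen (WeightArrow M φ σ) m n) : n.IsMaximal := by
  rcases h.cases_tail with rfl | ⟨_, _, hn⟩
  · exact hm
  · exact hn.2.1.1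

theorem exists_chain_of_reflTransGen_weightArrow
    (h : Relation.ReflTransGen (WeightArrow M φ σ) m n) (hmn : m ≠ n) :
    ∃ (k : ℕ) (c : ℕ → Ideal R), c 0 = m ∧ c (k + 1) = n ∧
      (∀ j, 1 ≤ j → j ≤ k → (c j).IsMaximal ∧ weightSpace (M := M) φ (c j) ≠ ⊥) ∧
      (∀ j ≤ k, ∀ r ∈ c j, σ r ∈ c (j + 1)) := by
  obtain ⟨_ | k, c, h0, hk, hc⟩ := exists_seq_of_reflTransGen h
  · exact absurd (h0.symm.trans hk) hmn
  · exact ⟨k, c, h0, hk, fun j _ hj => (hc j (Nat.lt_succ_of_le hj)).1,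
      fun j hj => (hc j (Nat.lt_succ_of_le hj)).2.2⟩

theorem exists_reflTransGen_weightArrow_of_pow_smul_ne_zero
    (hσ : ∀ n : Ideal R, n.IsMaximal → (n.comap σ).IsMaximal)
    (hY : ∀ r : R, φ r * Y = Y * φ (σ r)) (hm : m.IsMaximal) {v : M}
    (hv : v ∈ weightSpace φ m) {j : ℕ} (hj : Y ^ j • v ≠ 0) :
    ∃ k : Ideal R, k.IsMaximal ∧ Relation.ReflTransGen (WeightArrow M φ σ) k m ∧
      Y ^ j • v ∈ weightSpace φ k := by
  induction j with
  | zero => exact ⟨m, hm, .refl, by rwa [pow_zero, one_smul]⟩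
  | succ j ih =>
    rw [pow_succ', mul_smul] at hj ⊢
    have hj' : Y ^ j • v ≠ 0 := fun h => hj (by rw [h, smul_zero])
    obtain ⟨k, hk, hkm, hvk⟩ := ih hj'
    have hYv := smul_mem_weightSpace_comap hY hvk
    exact ⟨k.comap σ, hσ k hk, .head ⟨mem_weightSupport (hσ k hk) hYv hj,
      mem_weightSupport hk hvk hj', le_rfl⟩ hkm, hYv⟩

theorem map_smul_mem_weightBranch (hY : ∀ r : R, φ r * Y = Y * φ (σ r)) (r : R) {w : M}
    (hw : w ∈ weightBranch φ σ Y m) : φ r • w ∈ weightBranch φ σ Y m := by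
  rcases hw with ⟨k, hmk, hw⟩ | ⟨j, v, hv, rfl⟩
  · exact .inl ⟨k, hmk, map_smul_mem_weightSpace r hw⟩
  · refine .inr ⟨j, φ (σ^[j] r) • v, map_smul_mem_weightSpace _ hv, ?_⟩
    rw [← mul_smul, ← map_mul_pow_eq_pow_mul_map_iterate hY, mul_smul]

theorem smul_mem_weightBranch (hY : ∀ r : R, φ r * Y = Y * φ (σ r)) {w : M}
    (hw : w ∈ weightBranch φ σ Y m) : Y • w ∈ weightBranch φ σ Y m := by
  rcases hw with ⟨k, hmk, hw⟩ | ⟨j, v, hv, rfl⟩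
  · rcases hmk.cases_tail with rfl | ⟨b, hmb, hbk⟩
    · exact .inr ⟨1, w, hw, by rw [pow_one]⟩
    · exact .inl ⟨b, hmb, hbk.eq_comap ▸ smul_mem_weightSpace_comap hY hw⟩
  · exact .inr ⟨j + 1, v, hv, by rw [pow_succ', mul_smul]⟩

theorem smul_mem_closure_weightBranch_of_reflTransGen (hX : ∀ r : R, X * φ r = φ (σ r) * X)
    (hM : ⨆ k : {k : Ideal R // k.IsMaximal}, weightSpace (M := M) φ k.1 = ⊤)
    (hm : m.IsMaximal) {k : Ideal R} (hmk : Relation.ReflTransGen (WeightArrow M φ σ) m k)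
    {w : M} (hw : w ∈ weightSpace φ k) :
    X • w ∈ AddSubgroup.closure (weightBranch (M := M) φ σ Y m) := by
  rcases eq_or_ne w 0 with rfl | hw0
  · rw [smul_zero]
    exact zero_mem _
  have hXw : X • w ∈ ⨆ l : {l : Ideal R | l.IsMaximal ∧ k.map σ ≤ l}, weightSpace (M := M) φ l :=
    mem_iSup_weightSpace_of_mem_weightSpace (fun _ h => h) (smul_mem_weightSpace_map hX hw)
      (hM ▸ AddSubgroup.mem_top (X • w))
  suffices iSup_le_closure : ⨆ l : {l : Ideal R | l.IsMaximal ∧ k.map σ ≤ l}, weightSpace φ l ≤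
      AddSubgroup.closure (weightBranch (M := M) φ σ Y m) from iSup_le_closure hXw
  refine iSup_le fun l u hu => ?_
  rcases eq_or_ne u 0 with rfl | hu0
  · exact zero_mem _
  · have hk := isMaximal_of_reflTransGen_weightArrow hm hmk
    have hkl : WeightArrow M φ σ k l := ⟨mem_weightSupport hk hw hw0,
      mem_weightSupport l.2.1 hu hu0, Ideal.map_le_iff_le_comap.1 l.2.2⟩
    exact AddSubgroup.subset_closure (.inl ⟨l, hmk.tail hkl, hu⟩)

theorem smul_mem_closure_weightBranch {s : R} (hXY : X * Y = φ s)
    (hX : ∀ r : R, X * φ r = φ (σ r) * X) (hY : ∀ r : R, φ r * Y = Y * φ (σ r))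
    (hM : ⨆ k : {k : Ideal R // k.IsMaximal}, weightSpace (M := M) φ k.1 = ⊤)
    (hm : m.IsMaximal) {w : M} (hw : w ∈ weightBranch φ σ Y m) :
    X • w ∈ AddSubgroup.closure (weightBranch (M := M) φ σ Y m) := by
  rcases hw with ⟨k, hmk, hw⟩ | ⟨_ | j, v, hv, rfl⟩
  · exact smul_mem_closure_weightBranch_of_reflTransGen hX hM hm hmk hw
  · rw [pow_zero, one_smul]
    exact smul_mem_closure_weightBranch_of_reflTransGen hX hM hm .refl hv
  · rw [← mul_smul, pow_succ', ← mul_assoc, hXY, mul_smul]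
    exact AddSubgroup.subset_closure (map_smul_mem_weightBranch hY s (.inr ⟨j, v, hv, rfl⟩))

theorem span_weightSpace_le_closure_weightBranch {s : R} (hXY : X * Y = φ s)
    (hX : ∀ r : R, X * φ r = φ (σ r) * X) (hY : ∀ r : R, φ r * Y = Y * φ (σ r))
    (hgen : Subring.closure (Set.range φ ∪ {X, Y}) = ⊤)
    (hM : ⨆ k : {k : Ideal R // k.IsMaximal}, weightSpace (M := M) φ k.1 = ⊤)
    (hm : m.IsMaximal) :
    (Submodule.span A (weightSpace (M := M) φ m : Set M)).toAddSubgroup ≤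
      AddSubgroup.closure (weightBranch φ σ Y m) := by
  have weightSpace_subset : (weightSpace (M := M) φ m : Set M) ⊆ weightBranch φ σ Y m :=
    fun v hv => .inl ⟨m, .refl, hv⟩
  refine le_trans (Submodule.span_mono weightSpace_subset)
    (span_toAddSubgroup_le_closure hgen ?_)
  rintro _ (⟨r, rfl⟩ | rfl | rfl) w hw
  · exact AddSubgroup.subset_closure (map_smul_mem_weightBranch hY r hw)
  · exact smul_mem_closure_weightBranch hXY hX hY hM hm hw
  · exact AddSubgroup.subset_closure (smul_mem_weightBranch hY hw)

theorem closure_weightBranch_le_iSup_weightSpace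
    (hσ : ∀ n : Ideal R, n.IsMaximal → (n.comap σ).IsMaximal)
    (hY : ∀ r : R, φ r * Y = Y * φ (σ r)) (hm : m.IsMaximal) :
    AddSubgroup.closure (weightBranch (M := M) φ σ Y m) ≤
      ⨆ k : {k : Ideal R | k.IsMaximal ∧ (Relation.ReflTransGen (WeightArrow M φ σ) m k ∨
        Relation.ReflTransGen (WeightArrow M φ σ) k m)}, weightSpace φ k := by
  refine (AddSubgroup.closure_le _).2 ?_
  rintro w (⟨k, hmk, hw⟩ | ⟨j, v, hv, rfl⟩)
  · exact AddSubgroup.mem_iSup_of_mem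
      ⟨k, isMaximal_of_reflTransGen_weightArrow hm hmk, .inl hmk⟩ hw
  · rcases eq_or_ne (Y ^ j • v) 0 with hv0 | hv0
    · rw [hv0]
      exact zero_mem _
    · obtain ⟨k, hk, hkm, hvk⟩ :=
        exists_reflTransGen_weightArrow_of_pow_smul_ne_zero hσ hY hm hv hv0
      exact AddSubgroup.mem_iSup_of_mem ⟨k, hk, .inr hkm⟩ hvk

theorem span_weightSpace_eq_top [IsSimpleModule A M] (hm : weightSpace (M := M) φ m ≠ ⊥) :
    Submodule.span A (weightSpace (M := M) φ m : Set M) = ⊤ := by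
  refine (eq_bot_or_eq_top _).resolve_left fun hbot => hm ?_
  exact (AddSubgroup.eq_bot_iff_forall _).2 (Submodule.span_eq_bot.1 hbot)

end Support

theorem stmt_11_general [CommRing R] [Ring A] [AddCommGroup M] [Module A M]
    (φ : R →+* A) (σ : R →+* R) (s : R) (X Y : A)
    (hXY : X * Y = φ s)
    (hXr : ∀ r : R, X * φ r = φ (σ r) * X)
    (hrY : ∀ r : R, φ r * Y = Y * φ (σ r))
    (hσ : ∀ n : Ideal R, n.IsMaximal → (n.comap σ).IsMaximal)
    (hgen : Subring.closure (Set.range φ ∪ {X, Y}) = ⊤)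
    (hM : ⨆ k : {k : Ideal R // k.IsMaximal}, weightSpace (M := M) φ k.1 = ⊤)
    (m n : Ideal R) (hm : m.IsMaximal)
    (hspan : Submodule.span A (weightSpace (M := M) φ m : Set M) = ⊤)
    (hn : n ∈ weightSupport M φ) :
    Relation.ReflTransGen (WeightArrow M φ σ) m n ∨
      Relation.ReflTransGen (WeightArrow M φ σ) n m := by
  have top_le_closure : ⊤ ≤ AddSubgroup.closure (weightBranch (M := M) φ σ Y m) := by
    simpa only [hspan, Submodule.top_toAddSubgroup] using
      span_weightSpace_le_closure_weightBranch hXY hXr hrY hgen hM hm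
  have iSup_eq_top :=
    top_le_iff.1 (top_le_closure.trans (closure_weightBranch_le_iSup_weightSpace hσ hrY hm))
  exact (mem_of_mem_weightSupport_of_iSup_eq_top (fun _ hk => hk.1) iSup_eq_top hn).2

theorem stmt_11 [CommRing R] [Ring A] [AddCommGroup M] [Module A M]
    (φ : R →+* A) (σ : R →+* R) (t : R) (X Y : A)
    (hYX : Y * X = φ t) (hXY : X * Y = φ (σ t))
    (hXr : ∀ r : R, X * φ r = φ (σ r) * X)
    (hrY : ∀ r : R, φ r * Y = Y * φ (σ r))
    (hess : IsEssential σ)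
    (hgen : Subring.closure (Set.range φ ∪ {X, Y}) = ⊤)
    (hw : IsWeightModule (M := M) φ)
    (hsimple : IsSimpleModule A M)
    (m n : Ideal R) (hmn : m ≠ n)
    (hm : m.IsMaximal) (hmsupp : weightSpace (M := M) φ m ≠ ⊥)
    (hn : n.IsMaximal) (hnsupp : weightSpace (M := M) φ n ≠ ⊥) :
    (∃ (k : ℕ) (c : ℕ → Ideal R), c 0 = m ∧ c (k + 1) = n ∧
      (∀ j, 1 ≤ j → j ≤ k → (c j).IsMaximal ∧ weightSpace (M := M) φ (c j) ≠ ⊥) ∧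
      (∀ j ≤ k, ∀ r ∈ c j, σ r ∈ c (j + 1))) ∨
    (∃ (k : ℕ) (c : ℕ → Ideal R), c 0 = n ∧ c (k + 1) = m ∧
      (∀ j, 1 ≤ j → j ≤ k → (c j).IsMaximal ∧ weightSpace (M := M) φ (c j) ≠ ⊥) ∧
      (∀ j ≤ k, ∀ r ∈ c j, σ r ∈ c (j + 1))) :=
  (stmt_11_general φ σ (σ t) X Y hXY hXr hrY (fun _ => hess.comap_isMaximal) hgen hw.1 m n hm
    (span_weightSpace_eq_top hmsupp) ⟨hn, hnsupp⟩).imp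
    (exists_chain_of_reflTransGen_weightArrow · hmn)
    (exists_chain_of_reflTransGen_weightArrow · hmn.symm)
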